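/- Let t > 0 and let S_t = −diag(√t/2, √t/2, √t/2, √t/2, (1−t)/(2√t), (1−t)/(2√t)) ∈ M₆(ℝ). Then for each i = 1,…,6, the spin representation applied to the matrix Λ_t(Xᵢ) satisfies ρ(Λ_t(Xᵢ))·s₅ = c(S_t uᵢ)·s₅, where u₁,…,u₆ is the standard basis of ℝ⁶ and Λ_t(X₁) = (√t/2)(F₃₅+F₄₆), Λ_t(X₂) = (√t/2)(F₄₅−F₃₆), Λ_t(X₃) = (√t/2)(F₂₆−F₁₅), Λ_t(X₄) = −(√t/2)(F₁₆+F₂₅), Λ_t(X₅) = ((1−t)/(2√t))(F₁₃+F₂₄), Λ_t(X₆) = ((1−t)/(2√t))(F₁₄−F₂₃). In particular ⟨ρ(Λ_t(Xᵢ))·s₅, s₆⟩ = 0 for all i (the one-form η of the SU(3)-structure on ℂP³ vanishes). -/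

import Mathlib

/- STATEMENT 17: For t > 0 and S_t = −diag(√t/2, √t/2, √t/2, √t/2,
(1−t)/(2√t), (1−t)/(2√t)), for each i = 1,…,6 the spin representation satisfies
ρ(Λ_t(Xᵢ))·s₅ = c(S_t uᵢ)·s₅; in particular ⟨ρ(Λ_t(Xᵢ))·s₅, s₆⟩ = 0 (the
one-form η of the SU(3)-structure on ℂP³ vanishes).
(0-based indices: s 4 = s₅, s 5 = s₆.) -/

open Matrix

noncomputable section

namespace Stmt17

def E (i j : Fin 8) : Matrix (Fin 8) (Fin 8) ℝ :=
  Matrix.of fun k l => if k = i ∧ l = j then (-1 : ℝ) else if k = j ∧ l = i then 1 else 0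

def e : Fin 6 → Matrix (Fin 8) (Fin 8) ℝ :=
  ![E 0 7 + E 1 6 - E 2 5 - E 3 4,
    -E 0 6 + E 1 7 + E 2 4 - E 3 5,
    -E 0 5 + E 1 4 - E 2 7 + E 3 6,
    -E 0 4 - E 1 5 - E 2 6 - E 3 7,
    -E 0 2 - E 1 3 + E 4 6 + E 5 7,
    E 0 3 - E 1 2 - E 4 7 + E 5 6]

/-- Clifford multiplication by the vector `X ∈ ℝ⁶`. -/
def c (X : Fin 6 → ℝ) : Matrix (Fin 8) (Fin 8) ℝ := ∑ a, X a • e a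

def F (a b : Fin 6) : Matrix (Fin 6) (Fin 6) ℝ :=
  Matrix.of fun k l => if k = a ∧ l = b then (-1 : ℝ) else if k = b ∧ l = a then 1 else 0

/-- The differential of the spin representation `so(6) → M₈(ℝ)`: the linear map
determined by `ρ (F a b) = (1/2) eₐ * e_b` for `a < b`. -/
def ρ (A : Matrix (Fin 6) (Fin 6) ℝ) : Matrix (Fin 8) (Fin 8) ℝ :=
  (4⁻¹ : ℝ) • ∑ p, ∑ q, A q p • (e p * e q)

def s (i : Fin 8) : Fin 8 → ℝ := Pi.single i 1

/-- The standard basis `u₁, …, u₆` of `ℝ⁶` (0-based). -/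
def u (i : Fin 6) : Fin 6 → ℝ := Pi.single i 1

/-- The Levi-Civita connection of the metric `g_t` on `ℂP³ = SO(5)/U(2)`. -/
def Λ (t : ℝ) : Fin 6 → Matrix (Fin 6) (Fin 6) ℝ :=
  ![(Real.sqrt t / 2) • (F 2 4 + F 3 5),
    (Real.sqrt t / 2) • (F 3 4 - F 2 5),
    (Real.sqrt t / 2) • (F 1 5 - F 0 4),
    -((Real.sqrt t / 2) • (F 0 5 + F 1 4)),
    ((1 - t) / (2 * Real.sqrt t)) • (F 0 2 + F 1 3),
    ((1 - t) / (2 * Real.sqrt t)) • (F 0 3 - F 1 2)]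

/-- `S_t = −diag(√t/2, √t/2, √t/2, √t/2, (1−t)/(2√t), (1−t)/(2√t))`. -/
def S (t : ℝ) : Matrix (Fin 6) (Fin 6) ℝ :=
  -Matrix.diagonal ![Real.sqrt t / 2, Real.sqrt t / 2, Real.sqrt t / 2, Real.sqrt t / 2,
    (1 - t) / (2 * Real.sqrt t), (1 - t) / (2 * Real.sqrt t)]

/-!
The spinor `φ = s₅` determines a 3-form `ψ(X, Y, Z) = -⟨X · Y · φ, Z · φ⟩` on `ℝ⁶`, and the
connection is a contraction of it: `Λ_t(Xᵢ) = -(S_t uᵢ) ⌟ ψ`. It remains to see that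
`ρ(X ⌟ ψ) φ = -X · φ` for all `X`. Each of the four decomposable terms `uⁱ ∧ uʲ ∧ uᵏ` of `ψ`
comes from a relation `uᵢ · uⱼ · φ = -uₖ · φ`, which the Clifford relations make cyclically
invariant, so `ρ(X ⌟ (uⁱ ∧ uʲ ∧ uᵏ)) φ = -½ (Xᵢ uᵢ + Xⱼ uⱼ + Xₖ uₖ) · φ`. Every index lies in
exactly two of the terms, and the two halves add up. Finally `η = 0` because Clifford
multiplication by vectors carries `s₅` into the span of `s₁, …, s₄, s₇, s₈`.
-/

lemma mulVec_rotate {n R : Type*} [Fintype n] [DecidableEq n] [Ring R] {A B C : Matrix n n R}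
    {φ : n → R} (hA : A * A = -1) (hAC : A * C = -(C * A)) (h : A *ᵥ B *ᵥ φ = -(C *ᵥ φ)) :
    C *ᵥ A *ᵥ φ = -(B *ᵥ φ) :=
  calc C *ᵥ A *ᵥ φ = A *ᵥ -(C *ᵥ φ) := by
        rw [mulVec_neg, mulVec_mulVec, mulVec_mulVec, hAC, neg_mulVec, neg_neg]
    _ = -(B *ᵥ φ) := by rw [← h, mulVec_mulVec, hA, neg_mulVec, one_mulVec]

lemma E_mulVec_s {i j : Fin 8} (h : i ≠ j) (k : Fin 8) :
    E i j *ᵥ s k = if k = i then s j else if k = j then -s i else 0 := by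
  ext l
  rcases eq_or_ne k i with rfl | hi
  · simp [E, s, Pi.single_apply, h]
  rcases eq_or_ne k j with rfl | hj
  · simp [E, s, Pi.single_apply, hi]
    grind
  · simp [E, s, hi, hj]

lemma ext_mulVec_s {A B : Matrix (Fin 8) (Fin 8) ℝ} (h : ∀ k, A *ᵥ s k = B *ᵥ s k) : A = B :=
  ext_of_mulVec_single h

lemma e_mulVec_s (a : Fin 6) (k : Fin 8) :
    e a *ᵥ s k =
      ![![s 7, s 6, -s 5, -s 4, s 3, s 2, -s 1, -s 0],
        ![-s 6, s 7, s 4, -s 5, -s 2, s 3, s 0, -s 1],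
        ![-s 5, s 4, -s 7, s 6, -s 1, s 0, -s 3, s 2],
        ![-s 4, -s 5, -s 6, -s 7, s 0, s 1, s 2, s 3],
        ![-s 2, -s 3, s 0, s 1, s 6, s 7, -s 4, -s 5],
        ![s 3, -s 2, s 1, -s 0, -s 7, s 6, -s 5, s 4]] a k := by
  fin_cases a <;> fin_cases k <;>
    simp [e, add_mulVec, sub_mulVec, neg_mulVec, E_mulVec_s]

lemma e_mul_self (a : Fin 6) : e a * e a = -1 := by
  refine ext_mulVec_s fun k => ?_
  rw [← mulVec_mulVec, neg_mulVec, one_mulVec]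
  fin_cases a <;> fin_cases k <;> simp [e_mulVec_s, mulVec_neg]

lemma e_mul_e_anticomm {a b : Fin 6} (h : a ≠ b) : e a * e b = -(e b * e a) := by
  refine ext_mulVec_s fun k => ?_
  rw [neg_mulVec, ← mulVec_mulVec, ← mulVec_mulVec]
  revert h
  fin_cases a <;> fin_cases b <;> fin_cases k <;> simp [e_mulVec_s, mulVec_neg]

lemma F_eq_single_sub_single {a b : Fin 6} (h : a ≠ b) : F a b = single b a 1 - single a b 1 := by
  ext k l
  simp only [F, single, of_apply, Matrix.sub_apply]
  grind

lemma F_swap {a b : Fin 6} (h : a ≠ b) : F b a = -F a b := by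
  rw [F_eq_single_sub_single h, F_eq_single_sub_single h.symm, neg_sub]

lemma ρ_add (A B : Matrix (Fin 6) (Fin 6) ℝ) : ρ (A + B) = ρ A + ρ B := by
  simp [ρ, add_smul, Finset.sum_add_distrib]

lemma ρ_smul (r : ℝ) (A : Matrix (Fin 6) (Fin 6) ℝ) : ρ (r • A) = r • ρ A := by
  simp only [ρ, Matrix.smul_apply, smul_assoc, ← Finset.smul_sum]
  rw [smul_comm]

lemma ρ_single (a b : Fin 6) : ρ (single b a 1) = (4⁻¹ : ℝ) • (e a * e b) := by
  simp [ρ, single_apply, ite_and]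

lemma ρ_F {a b : Fin 6} (h : a ≠ b) : ρ (F a b) = (2⁻¹ : ℝ) • (e a * e b) := by
  rw [F_eq_single_sub_single h, sub_eq_add_neg, ← neg_one_smul ℝ (single a b (1 : ℝ)), ρ_add,
    ρ_smul, ρ_single, ρ_single, e_mul_e_anticomm h.symm]
  module

/-- Three distinct basis directions whose Clifford products satisfy `uᵢ · uⱼ · φ = -uₖ · φ`. For a
unit spinor `φ` this says that `uⁱ ∧ uʲ ∧ uᵏ` has coefficient `1` in the 3-form
`ψ(X, Y, Z) = -⟨X · Y · φ, Z · φ⟩`. -/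
structure IsCliffordTriple (φ : Fin 8 → ℝ) (i j k : Fin 6) : Prop where
  fst_ne_snd : i ≠ j
  snd_ne_trd : j ≠ k
  trd_ne_fst : k ≠ i
  mulVec_mulVec : e i *ᵥ e j *ᵥ φ = -(e k *ᵥ φ)

namespace IsCliffordTriple

variable {φ : Fin 8 → ℝ} {i j k : Fin 6}

lemma rotate (h : IsCliffordTriple φ i j k) : IsCliffordTriple φ k i j where
  fst_ne_snd := h.trd_ne_fst
  snd_ne_trd := h.fst_ne_snd
  trd_ne_fst := h.snd_ne_trd
  mulVec_mulVec :=
    mulVec_rotate (e_mul_self i) (e_mul_e_anticomm h.trd_ne_fst.symm) h.mulVec_mulVec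

lemma ρ_F_mulVec (h : IsCliffordTriple φ i j k) :
    ρ (F i j) *ᵥ φ = (-2⁻¹ : ℝ) • (e k *ᵥ φ) := by
  rw [ρ_F h.fst_ne_snd, smul_mulVec, ← Matrix.mulVec_mulVec, h.mulVec_mulVec, smul_neg, neg_smul]

end IsCliffordTriple

/-- The interior product `X ⌟ (uⁱ ∧ uʲ ∧ uᵏ)`, a 2-form being regarded as an element of `so(6)` by
letting `uᵃ ∧ uᵇ` correspond to `F a b`. -/
def tripleContraction (i j k : Fin 6) (X : Fin 6 → ℝ) : Matrix (Fin 6) (Fin 6) ℝ :=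
  X i • F j k + X j • F k i + X k • F i j

lemma IsCliffordTriple.ρ_tripleContraction_mulVec {φ : Fin 8 → ℝ} {i j k : Fin 6}
    (h : IsCliffordTriple φ i j k) (X : Fin 6 → ℝ) :
    ρ (tripleContraction i j k X) *ᵥ φ =
      (-2⁻¹ : ℝ) • (X i • (e i *ᵥ φ) + X j • (e j *ᵥ φ) + X k • (e k *ᵥ φ)) := by
  simp only [tripleContraction, ρ_add, ρ_smul, add_mulVec, smul_mulVec, h.ρ_F_mulVec,
    h.rotate.ρ_F_mulVec, h.rotate.rotate.ρ_F_mulVec]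
  module

lemma isCliffordTriple_zero_two_four : IsCliffordTriple (s 4) 0 2 4 := by
  constructor <;> simp [e_mulVec_s, mulVec_neg]

lemma isCliffordTriple_zero_three_five : IsCliffordTriple (s 4) 0 3 5 := by
  constructor <;> simp [e_mulVec_s]

lemma isCliffordTriple_one_three_four : IsCliffordTriple (s 4) 1 3 4 := by
  constructor <;> simp [e_mulVec_s]

lemma isCliffordTriple_one_five_two : IsCliffordTriple (s 4) 1 5 2 := by
  constructor <;> simp [e_mulVec_s, mulVec_neg]

/-- The interior product `X ⌟ ψ` in `so(6)`, where `ψ` is the 3-form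
`ψ(X, Y, Z) = -⟨X · Y · φ, Z · φ⟩` of the `SU(3)`-structure defined by the spinor `φ = s 4`. The
form is encoded by its four decomposable terms; the order `1 5 2` accounts for a sign. -/
def ψContraction (X : Fin 6 → ℝ) : Matrix (Fin 6) (Fin 6) ℝ :=
  tripleContraction 0 2 4 X + tripleContraction 0 3 5 X + tripleContraction 1 3 4 X +
    tripleContraction 1 5 2 X

lemma c_mulVec (X : Fin 6 → ℝ) (φ : Fin 8 → ℝ) : c X *ᵥ φ = ∑ a, X a • (e a *ᵥ φ) := by
  simp only [c, smul_mulVec, sum_mulVec]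

lemma ρ_ψContraction_mulVec_s_four (X : Fin 6 → ℝ) :
    ρ (ψContraction X) *ᵥ s 4 = c (-X) *ᵥ s 4 := by
  simp only [ψContraction, ρ_add, add_mulVec, c_mulVec, Fin.sum_univ_six, Pi.neg_apply,
    isCliffordTriple_zero_two_four.ρ_tripleContraction_mulVec,
    isCliffordTriple_zero_three_five.ρ_tripleContraction_mulVec,
    isCliffordTriple_one_three_four.ρ_tripleContraction_mulVec,
    isCliffordTriple_one_five_two.ρ_tripleContraction_mulVec]
  module

lemma ψContraction_eq_sum (X : Fin 6 → ℝ) :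
    ψContraction X =
      X 0 • (F 2 4 + F 3 5) + X 1 • (F 3 4 - F 2 5) + X 2 • (F 1 5 - F 0 4) -
        X 3 • (F 0 5 + F 1 4) + X 4 • (F 0 2 + F 1 3) + X 5 • (F 0 3 - F 1 2) := by
  have F_four_zero : F 4 0 = -F 0 4 := F_swap (by decide)
  have F_five_zero : F 5 0 = -F 0 5 := F_swap (by decide)
  have F_four_one : F 4 1 = -F 1 4 := F_swap (by decide)
  have F_five_two : F 5 2 = -F 2 5 := F_swap (by decide)
  have F_two_one : F 2 1 = -F 1 2 := F_swap (by decide)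
  simp only [ψContraction, tripleContraction, F_four_zero, F_five_zero, F_four_one, F_five_two,
    F_two_one]
  module

lemma S_mulVec_u (t : ℝ) (i : Fin 6) : S t *ᵥ u i = Pi.single i (S t i i) := by
  ext a
  rcases eq_or_ne a i with rfl | h <;> simp [S, u, *]

lemma Λ_eq_ψContraction (t : ℝ) (i : Fin 6) : Λ t i = ψContraction (-(S t *ᵥ u i)) := by
  rw [S_mulVec_u, ← Pi.single_neg, ψContraction_eq_sum]
  fin_cases i <;> simp [Λ, S]

lemma c_mulVec_s_four_dotProduct_s_five (X : Fin 6 → ℝ) : c X *ᵥ s 4 ⬝ᵥ s 5 = 0 := by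
  simp only [c_mulVec, Fin.sum_univ_six, e_mulVec_s]
  simp [s]

theorem CP3_intrinsic_torsion_eta_vanishes (t : ℝ) (ht : 0 < t) :
    ∀ i : Fin 6,
      (ρ (Λ t i)).mulVec (s 4) = (c ((S t).mulVec (u i))).mulVec (s 4) ∧
      (ρ (Λ t i)).mulVec (s 4) ⬝ᵥ s 5 = 0 := by
  intro i
  have hφ : ρ (Λ t i) *ᵥ s 4 = c (S t *ᵥ u i) *ᵥ s 4 := by
    rw [Λ_eq_ψContraction, ρ_ψContraction_mulVec_s_four, neg_neg]
  exact ⟨hφ, by rw [hφ, c_mulVec_s_four_dotProduct_s_five]⟩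

end Stmt17
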